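/- Let p be an odd prime with p ≠ 3, let V be a finite elementary abelian p-group on which a nonabelian finite group H acts faithfully and irreducibly, and suppose the semidirect product G = V ⋊ H has odd order. Let k be a subfield of ℂ containing the primitive p-th roots of unity. Then acd_{k,p'}(G) ≥ 3. -/

import Mathlib

/-!
Put `G = V ⋊ H`. All irreducible characters of `G` have odd degree (`odd_finrank`), so only the
linear ones have degree below 3, and it suffices to make up for the deficit of 2 that each `k`-valued
linear character contributes to `∑ (χ(1) - 3)`.

Linear characters of `G` are trivial on `V` (`linear_character_inl`), so there are at most `|A|` of
them with values in `k`, where `A` is the group of `k`-valued linear characters of `H`.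

A Sylow `p`-subgroup of `H` fixes a nontrivial linear character `l` of `V`; let `T` be the stabilizer
of `l` in `H` and `m = |H : T|`, which is prime to `p` (`exists_linChar_not_dvd_index`). Extending
`l` to `V ⋊ T`, inducing to `G` and twisting by `α ∈ A` gives an irreducible `k`-valued character of
degree `m`, realized here on the functions on the orbit of `l` (`orbitRep`). These characters depend
only on the orbit and on the restriction of `α` to `T`, and are otherwise distinct
(`orbitRep_character_inj`). Since `|H|` is odd, `l` and `l⁻¹` lie in different orbits
(`inv_notMem_orbit`), so this produces `2 |A| / |K|` characters of degree `m`, where `K` is the group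
of the `α ∈ A` that are trivial on `T`.

The claim follows once `m - 3 ≥ |K|` (`card_add_three_le_index`). The characters in `K` factor through
`H ⧸ T H'`, whence `|K| ≤ |H : T H'|`. By faithfulness and irreducibility `T` is trivial if it is
normal (`stabilizer_eq_bot_of_normal`). As `H` is nonabelian, this excludes `H' ≤ T` and, in odd
order, `m = 3`. So `|T H' : T| ≥ 3` and `m ≥ 5`, which gives the bound.
-/

/-- The set of irreducible complex characters of `G`. -/
noncomputable def Irr (G : Type) [Group G] : Set (G → ℂ) :=
  {χ | ∃ V : FDRep ℂ G, CategoryTheory.Simple V ∧ χ = FDRep.character V}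

/-- A group `G` has a normal `p`-complement: a normal subgroup of order coprime
to `p` whose index is a power of `p`. -/
def HasNormalPComplement (G : Type) [Group G] (p : ℕ) : Prop :=
  ∃ N : Subgroup G, N.Normal ∧ Nat.Coprime (Nat.card N) p ∧ ∃ n : ℕ, N.index = p ^ n

/-- The irreducible complex characters of `G` with values in `k` whose degree
is not divisible by `p`. -/
noncomputable def IrrKP (G : Type) [Group G] (k : Subfield ℂ) (p : ℕ) : Set (G → ℂ) :=
  {χ | ∃ V : FDRep ℂ G, CategoryTheory.Simple V ∧ χ = FDRep.character V ∧
       (∀ g, χ g ∈ k) ∧ ¬ (p ∣ Module.finrank ℂ V)}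

/-- The average of the degrees of the characters in `IrrKP G k p`. -/
noncomputable def acdKP (G : Type) [Group G] (k : Subfield ℂ) (p : ℕ) : ℝ :=
  (∑ᶠ χ ∈ IrrKP G k p, (χ 1).re) / (Nat.card (IrrKP G k p))

open CategoryTheory

/-! ### Irreducible characters of finite groups -/

/-- Character values are sums of roots of unity, hence algebraic integers. -/
lemma char_isIntegral {G : Type} [Group G] [Finite G] (W : FDRep ℂ G) (g : G) :
    IsIntegral ℤ (W.character g) := by
  have hs : (W.ρ g).charpoly.Splits := IsAlgClosed.splits _
  rw [FDRep.character, Module.End.trace_eq_sum_roots_charpoly_of_splits hs]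
  refine IsIntegral.multiset_sum fun z hz => ?_
  have hz' : Module.End.HasEigenvalue (W.ρ g) z := by
    rw [Module.End.hasEigenvalue_iff_isRoot_charpoly]
    exact Polynomial.isRoot_of_mem_roots hz
  obtain ⟨w, hw⟩ := hz'.exists_hasEigenvector
  refine ⟨Polynomial.X ^ Nat.card G - 1,
    Polynomial.monic_X_pow_sub_C 1 Nat.card_pos.ne', ?_⟩
  have h1 := hw.pow_apply (Nat.card G)
  rw [← map_pow, pow_card_eq_one', map_one] at h1
  have h2 : (z ^ Nat.card G - 1) • w = 0 := by
    rw [sub_smul, ← h1]; simp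
  have h3 := (smul_eq_zero.1 h2).resolve_right hw.2
  simpa using h3

/-- Irreducible characters of groups of odd order have odd degree. In `∑ χ(g) χ(g⁻¹) = |G|` the terms
for `g` and `g⁻¹` are equal algebraic integers, so `χ(1)² ≡ |G|` modulo `2` in the ring of algebraic
integers. -/
lemma odd_finrank {G : Type} [Group G] [Finite G] (hG : Odd (Nat.card G))
    (W : FDRep ℂ G) (hW : Simple W) : Odd (Module.finrank ℂ W) := by
  classical
  have := Fintype.ofFinite G
  by_contra hne
  rw [Nat.not_odd_iff_even] at hne
  have hnorm := (FDRep.simple_iff_char_is_norm_one W).1 hW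
  let R := integralClosure ℤ ℂ
  let f : G → R := fun g => ⟨W.character g, char_isIntegral W g⟩
  have hsum : ∑ g, f g * f g⁻¹ = (Nat.card G : R) := by
    apply Subtype.val_injective
    push_cast
    simpa [f] using hnorm
  let π := Ideal.Quotient.mk (Ideal.span {(2 : R)})
  have h2 : π 2 = 0 := Ideal.Quotient.eq_zero_iff_mem.2 (Ideal.mem_span_singleton_self 2)
  have hf1 : f 1 = (Module.finrank ℂ W : R) := by
    apply Subtype.val_injective
    simp [f]
  have heven : ∀ n : ℕ, Even n → π (n : R) = 0 := by
    rintro n ⟨m, rfl⟩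
    have : ((m + m : ℕ) : R) = 2 * m := by push_cast; ring
    rw [this, map_mul, h2, zero_mul]
  -- modulo 2 the terms of `g` and `g⁻¹` cancel for `g ≠ 1`
  have hcancel : ∑ g ∈ Finset.univ.erase (1 : G), π (f g * f g⁻¹) = 0 := by
    refine Finset.sum_involution (fun g _ => g⁻¹) ?_ ?_ ?_ ?_
    · intro g _
      rw [inv_inv, mul_comm (f g⁻¹), ← two_mul, ← map_ofNat π 2, h2, zero_mul]
    · intro g hg _ hinv
      have hg2 : g ^ 2 = 1 := by
        rw [pow_two]; nth_rewrite 1 [← hinv]; simp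
      have ho : orderOf g ∣ Nat.gcd 2 (Nat.card G) :=
        Nat.dvd_gcd (orderOf_dvd_of_pow_eq_one hg2) (orderOf_dvd_natCard g)
      rw [(Nat.coprime_two_left.2 hG : Nat.gcd 2 _ = 1), Nat.dvd_one, orderOf_eq_one_iff] at ho
      exact (Finset.mem_erase.1 hg).1 ho
    · intro g hg; simpa using hg
    · intro g _; simp
  have hone : π 1 = 0 := by
    obtain ⟨m, hm⟩ := hG
    have h4 := congrArg π hsum
    rw [map_sum, ← Finset.add_sum_erase _ _ (Finset.mem_univ (1 : G)), hcancel, hf1, map_mul,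
      heven _ hne, zero_mul, zero_add, hm] at h4
    have : ((2 * m + 1 : ℕ) : R) = 2 * m + 1 := by push_cast; ring
    rw [this, map_add, map_mul, h2, zero_mul, zero_add] at h4
    exact h4.symm
  obtain ⟨r, hr⟩ := Ideal.mem_span_singleton.1 (Ideal.Quotient.eq_zero_iff_mem.1 hone)
  have hr' : (r : ℂ) = algebraMap ℚ ℂ (1 / 2) := by
    have := congrArg Subtype.val hr
    push_cast at this
    simp
    field_simp
    rw [mul_comm]
    exact this.symm
  have hint : IsIntegral ℤ ((1 / 2 : ℚ)) := by
    have h5 : IsIntegral ℤ (r : ℂ) := r.2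
    rw [hr'] at h5
    exact (isIntegral_algebraMap_iff (algebraMap ℚ ℂ).injective).1 h5
  obtain ⟨n, hn⟩ := IsIntegrallyClosed.isIntegral_iff.1 hint
  have h6 : (2 * n : ℚ) = 1 := by
    have : (n : ℚ) = 1 / 2 := hn
    rw [this]; norm_num
  have h7 : 2 * n = 1 := by exact_mod_cast h6
  omega

/-- By orthogonality the irreducible characters are linearly independent, hence finite in number. -/
lemma Irr_finite (G : Type) [Group G] [Finite G] : (Irr G).Finite := by
  classical
  have := Fintype.ofFinite G
  have := invertibleOfNonzero (NeZero.ne (Nat.card G : ℂ))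
  have hli : LinearIndependent ℂ (Subtype.val : Irr G → G → ℂ) := by
    rw [linearIndependent_iff']
    intro s c hc i hi
    have horth : ∀ j : Irr G, j ≠ i → ∑ g, (j : G → ℂ) g * (i : G → ℂ) g⁻¹ = 0 := by
      rintro ⟨χ, X, hX, rfl⟩ hj
      obtain ⟨χ', Y, hY, rfl⟩ := i
      have h := FDRep.char_orthonormal X Y
      rw [if_neg] at h
      · simpa using h
      · rintro ⟨e⟩
        exact hj (Subtype.ext (FDRep.char_iso e))
    have hself : ∑ g, (i : G → ℂ) g * (i : G → ℂ) g⁻¹ = Nat.card G := by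
      obtain ⟨χ', Y, hY, rfl⟩ := i
      exact (FDRep.simple_iff_char_is_norm_one Y).1 hY
    have h0 : ∑ g, (∑ j ∈ s, c j • (j : G → ℂ)) g * (i : G → ℂ) g⁻¹ = 0 := by
      rw [hc]; simp
    have h1 : ∑ g, (∑ j ∈ s, c j • (j : G → ℂ)) g * (i : G → ℂ) g⁻¹
        = ∑ j ∈ s, c j * ∑ g, (j : G → ℂ) g * (i : G → ℂ) g⁻¹ := by
      simp_rw [Finset.sum_apply, Finset.sum_mul, Finset.mul_sum, Pi.smul_apply, smul_eq_mul]
      rw [Finset.sum_comm]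
      simp_rw [mul_assoc]
    rw [h0, Finset.sum_eq_single_of_mem i hi fun j _ hj => by rw [horth j hj, mul_zero],
      hself] at h1
    exact (mul_eq_zero.1 h1.symm).resolve_right (NeZero.ne _)
  exact hli.setFinite

lemma exists_hom_of_finrank_one {G : Type} [Group G] (W : FDRep ℂ G)
    (h : Module.finrank ℂ W = 1) : ∃ ψ : G →* ℂˣ, ∀ g, W.character g = (ψ g : ℂ) := by
  refine ⟨(LinearMap.det.comp W.ρ).toHomUnits, fun g => ?_⟩
  let b := Module.finBasisOfFinrankEq ℂ W h
  rw [FDRep.character, LinearMap.trace_eq_matrix_trace ℂ b, Matrix.trace_fin_one]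
  simp [MonoidHom.coe_toHomUnits, ← LinearMap.det_toMatrix b]

/-- A finite group has at most as many linear characters as elements, by Dedekind independence. -/
lemma card_hom_le (Q : Type) [Group Q] [Finite Q] :
    Finite (Q →* ℂˣ) ∧ Nat.card (Q →* ℂˣ) ≤ Nat.card Q := by
  have := Fintype.ofFinite Q
  have hinj : Function.Injective (fun f : Q →* ℂˣ => (Units.coeHom ℂ).comp f) := by
    intro f g h
    ext x
    exact DFunLike.congr_fun h x
  have hli := (linearIndependent_monoidHom Q ℂ).comp _ hinj
  have hfin : Finite (Q →* ℂˣ) := hli.finite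
  have := Fintype.ofFinite (Q →* ℂˣ)
  refine ⟨hfin, ?_⟩
  simpa using hli.fintype_card_le_finrank

/-! ### The representations of `V ⋊ H` attached to the orbits of `H` on the characters of `V` -/

/-- The converse of Schur's lemma, for complex representations of finite groups. -/
lemma simple_of_scalar_endo {G : Type} [Group G] [Finite G] {W : Type} [AddCommGroup W]
    [Module ℂ W] [Module.Finite ℂ W] [Nontrivial W] (ρ : Representation ℂ G W)
    (h : ∀ F : W →ₗ[ℂ] W, (∀ g w, F (ρ g w) = ρ g (F w)) → ∃ c : ℂ, ∀ w, F w = c • w) :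
    Simple (FDRep.of ρ) := by
  rw [FDRep.simple_iff_end_is_rank_one,
    ← (Representation.linHom.invariantsEquivFDRepHom (FDRep.of ρ) (FDRep.of ρ)).finrank_eq,
    FDRep.of_ρ']
  have hcomm : ∀ F : W →ₗ[ℂ] W, F ∈ (Representation.linHom ρ ρ).invariants ↔
      ∀ g w, F (ρ g w) = ρ g (F w) := by
    intro F
    refine forall_congr' fun g => ?_
    refine (Representation.linHom.mem_invariants_iff_comm (X := Rep.of ρ) (Y := Rep.of ρ) F g).trans
      ?_
    exact LinearMap.ext_iff
  have hid : (LinearMap.id : W →ₗ[ℂ] W) ∈ (Representation.linHom ρ ρ).invariants :=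
    (hcomm _).2 fun g w => rfl
  refine finrank_eq_one ⟨LinearMap.id, hid⟩ ?_ ?_
  · intro h0
    obtain ⟨w, hw⟩ := exists_ne (0 : W)
    exact hw (LinearMap.congr_fun (congrArg Subtype.val h0) w)
  · rintro ⟨F, hF⟩
    obtain ⟨c, hc⟩ := h F ((hcomm F).1 hF)
    exact ⟨c, Subtype.ext (LinearMap.ext fun w => (hc w).symm)⟩

section
variable {V H : Type} [CommGroup V] [Group H]

/-- The group of linear characters of `V`, as a type synonym depending on the action `φ` of `H`
on `V`, so that it can carry the contragredient action of `H`. -/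
def LinChar (_φ : H →* MulAut V) : Type := V →* ℂˣ

variable {φ : H →* MulAut V}

instance : CommGroup (LinChar φ) := inferInstanceAs (CommGroup (V →* ℂˣ))

instance : FunLike (LinChar φ) V ℂˣ := inferInstanceAs (FunLike (V →* ℂˣ) V ℂˣ)

instance : MonoidHomClass (LinChar φ) V ℂˣ := inferInstanceAs (MonoidHomClass (V →* ℂˣ) V ℂˣ)

/-- The contragredient action: `(h • μ) v = μ (h⁻¹ v)`. -/
instance : MulAction H (LinChar φ) where
  smul h μ := MonoidHom.comp (show V →* ℂˣ from μ) (φ h⁻¹).toMonoidHom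
  one_smul μ := by
    refine DFunLike.ext _ _ fun v => ?_
    change μ (φ 1⁻¹ v) = μ v
    simp
  mul_smul a b μ := by
    refine DFunLike.ext _ _ fun v => ?_
    change μ (φ (a * b)⁻¹ v) = μ (φ b⁻¹ (φ a⁻¹ v))
    simp

lemma LinChar.smul_apply (h : H) (μ : LinChar φ) (v : V) : (h • μ) v = μ (φ h⁻¹ v) := rfl

lemma LinChar.inv_apply (μ : LinChar φ) (v : V) : μ⁻¹ v = (μ v)⁻¹ := rfl

lemma LinChar.pow_apply (μ : LinChar φ) (n : ℕ) (v : V) : (μ ^ n) v = μ v ^ n := rfl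

lemma LinChar.smul_inv (h : H) (μ : LinChar φ) : h • μ⁻¹ = (h • μ)⁻¹ := rfl

/-- Dedekind independence of characters. -/
lemma LinChar.linearIndependent :
    LinearIndependent ℂ (fun (μ : LinChar φ) (v : V) => (μ v : ℂ)) := by
  refine (linearIndependent_monoidHom V ℂ).comp
    (fun μ : LinChar φ => (Units.coeHom ℂ).comp (show V →* ℂˣ from μ)) ?_
  intro μ ν h
  refine DFunLike.ext _ _ fun v => Units.ext ?_
  exact DFunLike.congr_fun h v

/-- A nonempty finite sum of distinct linear characters is not the zero function. -/
lemma LinChar.exists_sum_ne_zero (s : Finset (LinChar φ)) (hs : s.Nonempty) :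
    ∃ v : V, ∑ μ ∈ s, (μ v : ℂ) ≠ 0 := by
  by_contra! h
  obtain ⟨μ, hμ⟩ := hs
  have := linearIndependent_iff'.1 (LinChar.linearIndependent (φ := φ)) s (fun _ => 1)
    (by ext v; simpa using h v) μ hμ
  exact one_ne_zero this

/-- Finite sets of linear characters are determined by their sums. -/
lemma LinChar.eq_of_sum_eq (s t : Finset (LinChar φ))
    (h : ∀ v : V, ∑ μ ∈ s, (μ v : ℂ) = ∑ μ ∈ t, (μ v : ℂ)) : s = t := by
  classical
  have key := linearIndependent_iff'.1 (LinChar.linearIndependent (φ := φ)) (s ∪ t)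
    (fun μ => (if μ ∈ s then 1 else 0) - (if μ ∈ t then 1 else 0)) (by
      ext v
      have hs : ∑ μ ∈ s ∪ t, (if μ ∈ s then (μ v : ℂ) else 0) = ∑ μ ∈ s, (μ v : ℂ) := by
        rw [← Finset.sum_filter]; congr 1; ext; simp
      have ht : ∑ μ ∈ s ∪ t, (if μ ∈ t then (μ v : ℂ) else 0) = ∑ μ ∈ t, (μ v : ℂ) := by
        rw [← Finset.sum_filter]; congr 1; ext; simp
      simp [sub_mul, Finset.sum_apply, hs, ht, h v])
  ext μ
  by_cases h1 : μ ∈ s <;> by_cases h2 : μ ∈ t <;> simp only [h1, h2]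
  · simpa [h1, h2] using key μ (by simp [h1])
  · simpa [h1, h2] using key μ (by simp [h2])

/-- The representation of `V ⋊ H` on the functions on the `H`-orbit of `l`, given by
`(v, h) f (μ) = α(h) μ(v) f(h⁻¹ μ)`. It is the representation induced from the canonical extension
of `l` to `V ⋊ H_l`, twisted by the linear character `α` of `H`. -/
noncomputable def orbitRep (l : LinChar φ) (α : H →* ℂˣ) :
    Representation ℂ (V ⋊[φ] H) (MulAction.orbit H l → ℂ) where
  toFun g :=
    { toFun := fun f μ => (α g.right : ℂ) * ((μ : LinChar φ) g.left : ℂ) * f (g.right⁻¹ • μ)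
      map_add' := fun f f' => by ext μ; simp [mul_add]
      map_smul' := fun c f => by ext μ; simp; ring }
  map_one' := by
    ext f μ : 2
    simp
  map_mul' a b := by
    refine LinearMap.ext fun f => funext fun μ => ?_
    simp [mul_smul, LinChar.smul_apply]
    ring

lemma orbitRep_apply (l : LinChar φ) (α : H →* ℂˣ) (g : V ⋊[φ] H) (f : MulAction.orbit H l → ℂ)
    (μ : MulAction.orbit H l) : orbitRep l α g f μ =
      (α g.right : ℂ) * ((μ : LinChar φ) g.left : ℂ) * f (g.right⁻¹ • μ) := rfl

variable [Finite V]

noncomputable instance : Fintype (LinChar φ) :=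
  have : Finite (LinChar φ) := (card_hom_le V).1
  Fintype.ofFinite _

/-- The orbit representations are irreducible: `V` separates the delta functions on the orbit and
`H` permutes them transitively, so that only scalars commute with the action. -/
lemma orbitRep_simple [Finite H] (l : LinChar φ) (α : H →* ℂˣ) :
    Simple (FDRep.of (orbitRep l α)) := by
  classical
  have : Finite (V ⋊[φ] H) := Finite.of_equiv _ SemidirectProduct.equivProd.symm
  have := Fintype.ofFinite (MulAction.orbit H l)
  have hne : Nonempty (MulAction.orbit H l) := ⟨⟨l, MulAction.mem_orbit_self l⟩⟩
  refine simple_of_scalar_endo _ fun F hF => ?_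
  -- `V` acts on the delta functions by distinct characters, so `F` is diagonal
  have hdiag : ∀ μ ν : MulAction.orbit H l, ν ≠ μ → F (Pi.single μ 1) ν = 0 := by
    intro μ ν hne
    obtain ⟨v, hv⟩ : ∃ v, (μ : LinChar φ) v ≠ (ν : LinChar φ) v := by
      by_contra! h
      exact hne (Subtype.ext (DFunLike.ext _ _ fun v => (h v).symm))
    have h1 : orbitRep l α (SemidirectProduct.inl v) (Pi.single μ 1)
        = ((μ : LinChar φ) v : ℂ) • Pi.single μ 1 := by
      ext ν
      rw [orbitRep_apply]
      by_cases h : ν = μ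
      · subst h; simp
      · simp [h]
    have h2 := congrFun (hF (SemidirectProduct.inl v) (Pi.single μ 1)) ν
    rw [h1, orbitRep_apply] at h2
    simp at h2
    rcases h2 with h2 | h2
    · exact absurd (Units.ext h2) hv
    · exact h2
  -- `H` permutes the delta functions transitively, so the diagonal entries agree
  have hconst : ∀ (μ : MulAction.orbit H l) (h : H),
      F (Pi.single (h • μ) 1) (h • μ) = F (Pi.single μ 1) μ := by
    intro μ h
    have h1 : orbitRep l α (SemidirectProduct.inr h) (Pi.single μ 1)
        = (α h : ℂ) • Pi.single (h • μ) 1 := by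
      ext ν
      rw [orbitRep_apply]
      by_cases hν : ν = h • μ
      · subst hν; simp
      · have : h⁻¹ • ν ≠ μ := fun h' => hν (by rw [← h', smul_inv_smul])
        simp [hν, this]
    have h2 := congrFun (hF (SemidirectProduct.inr h) (Pi.single μ 1)) (h • μ)
    rw [h1, orbitRep_apply] at h2
    simpa using h2
  let l0 : MulAction.orbit H l := ⟨l, MulAction.mem_orbit_self l⟩
  refine ⟨F (Pi.single l0 1) l0, fun w => ?_⟩
  have hlin : F = F (Pi.single l0 1) l0 • LinearMap.id := by
    refine LinearMap.pi_ext' fun μ => LinearMap.ext_ring ?_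
    ext ν
    obtain ⟨h, rfl⟩ := MulAction.exists_smul_eq H l0 μ
    by_cases hν : ν = h • l0
    · subst hν
      simp [hconst]
    · simp [hdiag _ _ hν, hν]
  exact LinearMap.congr_fun hlin w

open Classical in
/-- The linear characters in the `H`-orbit of `l` that are fixed by `h`. -/
noncomputable def fixOrbit (l : LinChar φ) (h : H) : Finset (LinChar φ) :=
  {μ | μ ∈ MulAction.orbit H l ∧ h • μ = μ}

lemma mem_fixOrbit {l : LinChar φ} {h : H} {μ : LinChar φ} :
    μ ∈ fixOrbit l h ↔ μ ∈ MulAction.orbit H l ∧ h • μ = μ := by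
  simp [fixOrbit]

lemma orbitRep_character (l : LinChar φ) (α : H →* ℂˣ) (g : V ⋊[φ] H) :
    (FDRep.of (orbitRep l α)).character g =
      (α g.right : ℂ) * ∑ μ ∈ fixOrbit l g.right, (μ g.left : ℂ) := by
  classical
  have := Fintype.ofFinite (MulAction.orbit H l)
  change LinearMap.trace ℂ (MulAction.orbit H l → ℂ) (orbitRep l α g) = _
  rw [LinearMap.trace_eq_matrix_trace ℂ (Pi.basisFun ℂ _), Matrix.trace, Finset.mul_sum]
  have h1 : ∀ μ : MulAction.orbit H l,
      (LinearMap.toMatrix (Pi.basisFun ℂ _) (Pi.basisFun ℂ _) (orbitRep l α g)).diag μ =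
        if g.right • (μ : LinChar φ) = μ then
          (α g.right : ℂ) * ((μ : LinChar φ) g.left : ℂ) else 0 := by
    intro μ
    rw [Matrix.diag_apply, LinearMap.toMatrix_apply, Pi.basisFun_apply, Pi.basisFun_repr,
      orbitRep_apply, Pi.single_apply]
    have : g.right⁻¹ • μ = μ ↔ g.right • (μ : LinChar φ) = μ := by
      rw [inv_smul_eq_iff, eq_comm, Subtype.ext_iff]; rfl
    simp [this]
  simp_rw [h1]
  rw [← Finset.sum_filter]
  refine Finset.sum_bij (fun μ _ => (μ : LinChar φ)) ?_ ?_ ?_ ?_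
  · intro μ hμ
    exact mem_fixOrbit.2 ⟨μ.2, (Finset.mem_filter.1 hμ).2⟩
  · intro μ _ ν _ h
    exact Subtype.ext h
  · intro μ hμ
    exact ⟨⟨μ, (mem_fixOrbit.1 hμ).1⟩, by simpa using (mem_fixOrbit.1 hμ).2, rfl⟩
  · intro μ _; rfl

/-- The degree of an orbit representation is the length of the orbit. -/
lemma orbitRep_finrank (l : LinChar φ) (α : H →* ℂˣ) :
    Module.finrank ℂ (FDRep.of (orbitRep l α)) = (MulAction.stabilizer H l).index := by
  have := Fintype.ofFinite (MulAction.orbit H l)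
  change Module.finrank ℂ (MulAction.orbit H l → ℂ) = _
  rw [Module.finrank_fintype_fun_eq_card, MulAction.index_stabilizer, Set.ncard_eq_toFinset_card',
    Set.toFinset_card]

/-- The characters of two orbit representations differ as soon as the orbits are different or the
twists differ on the stabilizer. -/
lemma orbitRep_character_inj {l l' : LinChar φ} {α α' : H →* ℂˣ}
    (h : (FDRep.of (orbitRep l α)).character = (FDRep.of (orbitRep l' α')).character) :
    l' ∈ MulAction.orbit H l ∧ ∀ t ∈ MulAction.stabilizer H l, α t = α' t := by
  have hfix : fixOrbit l 1 = fixOrbit l' 1 := by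
    refine LinChar.eq_of_sum_eq _ _ fun v => ?_
    simpa [orbitRep_character] using congrFun h (SemidirectProduct.inl v)
  have horb : MulAction.orbit H l = MulAction.orbit H l' := by
    ext μ
    have := congrArg (μ ∈ ·) hfix
    simpa [mem_fixOrbit] using this
  refine ⟨horb ▸ MulAction.mem_orbit_self l', fun t ht => ?_⟩
  obtain ⟨v, hv⟩ := LinChar.exists_sum_ne_zero (fixOrbit l t)
    ⟨l, mem_fixOrbit.2 ⟨MulAction.mem_orbit_self l, ht⟩⟩
  have h1 : fixOrbit l' t = fixOrbit l t := by
    ext μ; rw [mem_fixOrbit, mem_fixOrbit, horb]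
  have h2 := congrFun h ⟨v, t⟩
  rw [orbitRep_character, orbitRep_character, h1] at h2
  exact Units.ext (mul_right_cancel₀ hv h2)

/-- The values of linear characters of `V` are `p`-th roots of unity, so the character of an orbit
representation with a `k`-valued twist is `k`-valued. -/
lemma orbitRep_character_mem {p : ℕ} (hp : p.Prime) (hV : ∀ v : V, v ^ p = 1) {k : Subfield ℂ}
    (hkp : ∀ z : ℂ, IsPrimitiveRoot z p → z ∈ k) (l : LinChar φ) (α : H →* ℂˣ)
    (hα : ∀ h, (α h : ℂ) ∈ k) (g : V ⋊[φ] H) :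
    (FDRep.of (orbitRep l α)).character g ∈ k := by
  rw [orbitRep_character]
  refine k.mul_mem (hα _) (k.sum_mem fun μ _ => ?_)
  have h1 : (μ g.left : ℂ) ^ p = 1 := by
    rw [← Units.val_pow_eq_pow_val, ← map_pow, hV, map_one, Units.val_one]
  by_cases h : (μ g.left : ℂ) = 1
  · rw [h]; exact k.one_mem
  · have : Fact p.Prime := ⟨hp⟩
    exact hkp _ (IsPrimitiveRoot.iff_orderOf.2 (orderOf_eq_prime h1 h))
end

/-! ### Stabilizers of linear characters of `V` -/

section
open scoped commutatorElement

variable {V H : Type} [CommGroup V] [Group H] {φ : H →* MulAut V}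

/-- A Sylow `p`-subgroup of `H` fixes a nontrivial linear character of the `p`-group `V`, so some
nontrivial linear character has an orbit of length prime to `p`. -/
lemma exists_linChar_not_dvd_index [Finite V] [Finite H] [Nontrivial V] {p : ℕ} (hp : p.Prime)
    (hV : ∀ v : V, v ^ p = 1) (φ : H →* MulAut V) :
    ∃ l : LinChar φ, l ≠ 1 ∧ ¬ p ∣ (MulAction.stabilizer H l).index := by
  have : Fact p.Prime := ⟨hp⟩
  have hpV : IsPGroup p V := fun v => ⟨1, by rw [pow_one, hV]⟩
  have hcard : Nat.card (LinChar φ) = Nat.card V :=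
    CommGroup.card_monoidHom_of_hasEnoughRootsOfUnity V ℂ
  have hdvd : p ∣ Nat.card (LinChar φ) := by
    obtain ⟨n, hn⟩ := IsPGroup.iff_card.1 hpV
    rw [hcard, hn]
    refine dvd_pow_self p fun h0 => ?_
    rw [h0, pow_zero] at hn
    exact (Finite.one_lt_card (α := V)).ne' hn
  let P : Sylow p H := default
  have h1 : (1 : LinChar φ) ∈ MulAction.fixedPoints P (LinChar φ) := fun _ => rfl
  obtain ⟨l, hl, hne⟩ := P.2.exists_fixed_point_of_prime_dvd_card_of_fixed_point _ hdvd h1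
  refine ⟨l, hne.symm, fun hd => P.not_dvd_index (hd.trans (Subgroup.index_dvd_of_le ?_))⟩
  intro x hx
  exact hl ⟨x, hx⟩

/-- The stabilizer of a nontrivial linear character is trivial if it is normal: by irreducibility the
orbit separates the points of `V`, and a normal stabilizer fixes the whole orbit. -/
lemma stabilizer_eq_bot_of_normal (hfaith : Function.Injective φ)
    (hirr : ∀ W : Subgroup V, (∀ (h : H) (v : V), v ∈ W → φ h v ∈ W) → W = ⊥ ∨ W = ⊤)
    {l : LinChar φ} (hl : l ≠ 1) (hn : (MulAction.stabilizer H l).Normal) :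
    MulAction.stabilizer H l = ⊥ := by
  let W : Subgroup V := ⨅ h : H, MonoidHom.ker (show V →* ℂˣ from h • l)
  have hmem : ∀ v, v ∈ W ↔ ∀ h : H, (h • l) v = 1 := fun v => by
    simp only [W, Subgroup.mem_iInf]; rfl
  have hW : W = ⊥ := by
    refine (hirr W fun h v hv => ?_).resolve_right fun htop => hl ?_
    · rw [hmem] at hv ⊢
      intro g
      have := hv (h⁻¹ * g)
      rw [mul_smul, LinChar.smul_apply, inv_inv] at this
      exact this
    · refine DFunLike.ext _ _ fun v => ?_
      have hv : v ∈ W := htop ▸ Subgroup.mem_top v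
      have h1 := (hmem v).1 hv 1
      rw [one_smul] at h1
      exact h1
  rw [eq_bot_iff]
  intro t ht
  rw [Subgroup.mem_bot]
  apply hfaith
  rw [map_one]
  refine MulEquiv.ext fun v => ?_
  have hv : φ t v * v⁻¹ ∈ W := by
    rw [hmem]
    intro h
    have hfix : t⁻¹ • h • l = h • l := by
      have h1 := hn.conj_mem _ (inv_mem ht) h⁻¹
      rw [inv_inv, MulAction.mem_stabilizer_iff, mul_smul, mul_smul, inv_smul_eq_iff] at h1
      exact h1
    have h2 := DFunLike.congr_fun hfix v
    rw [LinChar.smul_apply, inv_inv] at h2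
    rw [map_mul, map_inv, h2, mul_inv_cancel]
  rw [hW, Subgroup.mem_bot, mul_inv_eq_one] at hv
  exact hv

/-- In odd order, a nontrivial character of odd exponent is not conjugate to its inverse. -/
lemma inv_notMem_orbit [Finite H] (hH : Odd (Nat.card H)) {p : ℕ} (hpodd : Odd p)
    (hV : ∀ v : V, v ^ p = 1) {l : LinChar φ} (hl : l ≠ 1) : l⁻¹ ∉ MulAction.orbit H l := by
  rintro ⟨h, hh : h • l = l⁻¹⟩
  have h2 : h ^ 2 ∈ MulAction.stabilizer H l := by
    rw [MulAction.mem_stabilizer_iff, pow_two, mul_smul, hh, LinChar.smul_inv, hh, inv_inv]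
  have h1 : h ∈ MulAction.stabilizer H l := by
    obtain ⟨m, hm⟩ := hH
    have : h = (h ^ 2) ^ (m + 1) := by
      rw [← pow_mul, show 2 * (m + 1) = Nat.card H + 1 by omega, pow_succ, pow_card_eq_one',
        one_mul]
    rw [this]
    exact pow_mem h2 _
  have h3 : l = l⁻¹ := (MulAction.mem_stabilizer_iff.1 h1).symm.trans hh
  have h4 : l ^ 2 = 1 := by rw [pow_two]; nth_rewrite 1 [h3]; exact inv_mul_cancel l
  have h5 : l ^ p = 1 := DFunLike.ext _ _ fun v => by
    rw [LinChar.pow_apply, ← map_pow, hV, map_one]; rfl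
  obtain ⟨m, rfl⟩ := hpodd
  rw [pow_succ, pow_mul, h4, one_pow, one_mul] at h5
  exact hl h5

/-- `V` lies in the kernel of every linear character of `V ⋊ H`. -/
lemma linear_character_inl [Nontrivial H] (hfaith : Function.Injective φ)
    (hirr : ∀ W : Subgroup V, (∀ (h : H) (v : V), v ∈ W → φ h v ∈ W) → W = ⊥ ∨ W = ⊤)
    (ψ : V ⋊[φ] H →* ℂˣ) (v : V) : ψ (SemidirectProduct.inl v) = 1 := by
  let μ : V →* ℂˣ := ψ.comp SemidirectProduct.inl
  have hinv : ∀ h v, μ (φ h v) = μ v := by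
    intro h v
    change ψ (SemidirectProduct.inl (φ h v)) = ψ (SemidirectProduct.inl v)
    rw [SemidirectProduct.inl_aut, map_mul, map_mul, mul_right_comm, ← map_mul, ← map_mul]
    simp
  rcases hirr μ.ker (fun h v hv => by rw [MonoidHom.mem_ker] at hv ⊢; rw [hinv, hv]) with h | h
  · exfalso
    have hinj := (MonoidHom.ker_eq_bot_iff μ).1 h
    obtain ⟨x, hx⟩ := exists_ne (1 : H)
    refine hx (hfaith ?_)
    rw [map_one]
    exact MulEquiv.ext fun v => hinj (hinv x v)
  · have : v ∈ μ.ker := h ▸ Subgroup.mem_top v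
    exact this

/-- Let `T` be a subgroup of a nonabelian group `H` of odd order such that `T` is not normal unless
it is trivial. Then the index of `T` exceeds the number of linear characters of `H` trivial on `T`
by at least 3: these characters factor through `H ⧸ T H'`, and `T` is a proper subgroup of `T H'`,
hence of index at least 3 in it, while a subgroup `T` of index 3 would be normal. -/
lemma card_add_three_le_index [Finite H] (hH : Odd (Nat.card H)) (hna : ∃ a b : H, a * b ≠ b * a)
    (T : Subgroup H) (hT : T.Normal → T = ⊥) (K : Subgroup (H →* ℂˣ))
    (hK : ∀ α ∈ K, ∀ t ∈ T, α t = 1) : Nat.card K + 3 ≤ T.index := by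
  obtain ⟨a, b, hab⟩ := hna
  let N : Subgroup H := T ⊔ commutator H
  have hTN : T ≤ N := le_sup_left
  have hN : N.Normal := Subgroup.Normal.of_commutator_le H le_sup_right
  have hKN : Nat.card K ≤ N.index := by
    have hker : ∀ α ∈ K, N ≤ MonoidHom.ker α := fun α hα =>
      sup_le (fun t ht => hK α hα t ht) (Abelianization.commutator_subset_ker α)
    obtain ⟨hfin, hle⟩ := card_hom_le (H ⧸ N)
    refine le_trans ?_ hle
    refine Nat.card_le_card_of_injective
      (fun α : K => QuotientGroup.lift N (α : H →* ℂˣ) (hker α α.2)) ?_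
    intro α β h
    refine Subtype.ext (MonoidHom.ext fun x => ?_)
    exact DFunLike.congr_fun h (x : H ⧸ N)
  have hmul := Subgroup.relIndex_mul_index hTN
  have hodd : Odd T.index := hH.of_dvd_nat T.index_dvd_card
  have hodd' : Odd (T.relIndex N) := hodd.of_dvd_nat ⟨_, hmul.symm⟩
  have h1 : T.relIndex N ≠ 1 := by
    intro h
    have hNT : N = T := le_antisymm (Subgroup.relIndex_eq_one.1 h) hTN
    have hbot := hT (hNT ▸ hN)
    have hmem : ⁅a, b⁆ ∈ N := le_sup_right (a := T)
      (Subgroup.commutator_mem_commutator (Subgroup.mem_top a) (Subgroup.mem_top b))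
    rw [hNT, hbot, Subgroup.mem_bot, commutatorElement_eq_one_iff_mul_comm] at hmem
    exact hab hmem
  have h3 : T.index ≠ 3 := by
    intro h
    have hbot := hT (Subgroup.normal_of_index_eq_minFac_card ?_)
    · rw [hbot, Subgroup.index_bot] at h
      have : Fact (Nat.Prime 3) := ⟨Nat.prime_three⟩
      have := isCyclic_of_prime_card h
      exact hab (IsCyclic.isMulCommutative.is_comm.comm a b)
    · rw [h]
      have h3 : (Nat.card H).minFac ≤ 3 :=
        Nat.minFac_le_of_dvd (by norm_num) (h ▸ T.index_dvd_card)
      have h0 := Nat.minFac_dvd (Nat.card H)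
      have h2 : Odd (Nat.card H).minFac := hH.of_dvd_nat h0
      have hne : (Nat.card H).minFac ≠ 1 := by
        rw [Ne, Nat.minFac_eq_one_iff]
        intro hc
        have := T.index_dvd_card
        rw [h, hc] at this
        omega
      obtain ⟨m, hm⟩ := h2
      omega
  have hNpos : 0 < N.index := Nat.pos_of_ne_zero N.index_ne_zero_of_finite
  have hr : 3 ≤ T.relIndex N := by
    obtain ⟨m, hm⟩ := hodd'
    omega
  have hle : 3 * N.index ≤ T.index := by
    rw [← hmul]; exact Nat.mul_le_mul_right _ hr
  obtain ⟨m, hm⟩ := hodd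
  omega
end

/-! ### The average degree -/

theorem acdKP_ge_three_nonabelian
    (p : ℕ) (hp : p.Prime) (hpodd : Odd p) (hp3 : p ≠ 3)
    (V : Type) [CommGroup V] [Fintype V] (hV : ∀ v : V, v ^ p = 1)
    (H : Type) [Group H] [Fintype H] (hna : ∃ a b : H, a * b ≠ b * a)
    (φ : H →* MulAut V) (hfaith : Function.Injective φ)
    (hirr : ∀ W : Subgroup V, (∀ (h : H) (v : V), v ∈ W → φ h v ∈ W) → W = ⊥ ∨ W = ⊤)
    (hG : Odd (Nat.card (V ⋊[φ] H)))
    (k : Subfield ℂ) (hkp : ∀ z : ℂ, IsPrimitiveRoot z p → z ∈ k) :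
    (3 : ℝ) ≤ acdKP (V ⋊[φ] H) k p := by
  classical
  have hGfin : Finite (V ⋊[φ] H) := Finite.of_equiv _ SemidirectProduct.equivProd.symm
  have hHodd : Odd (Nat.card H) := by
    rw [SemidirectProduct.card, Nat.odd_mul] at hG
    exact hG.2
  have hHnt : Nontrivial H := by
    obtain ⟨a, b, hab⟩ := hna
    exact ⟨a * b, b * a, hab⟩
  have hVnt : Nontrivial V := by
    by_contra h
    rw [not_nontrivial_iff_subsingleton] at h
    obtain ⟨x, hx⟩ := exists_ne (1 : H)
    exact hx (hfaith (MulEquiv.ext fun v => Subsingleton.elim _ _))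
  obtain ⟨l, hl, hpl⟩ := exists_linChar_not_dvd_index hp hV φ
  set T := MulAction.stabilizer H l with hTdef
  have hstab_inv : MulAction.stabilizer H l⁻¹ = T := by
    ext h
    rw [MulAction.mem_stabilizer_iff, hTdef, MulAction.mem_stabilizer_iff, LinChar.smul_inv,
      inv_inj]
  have hinv := inv_notMem_orbit hHodd hpodd hV hl
  -- the `k`-valued linear characters of `H`, and their restriction to `T`
  let A : Subgroup (H →* ℂˣ) :=
    { carrier := {α | ∀ h, (α h : ℂ) ∈ k}
      one_mem' := fun h => by simp
      mul_mem' := fun {α β} hα hβ h => by simpa using k.mul_mem (hα h) (hβ h)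
      inv_mem' := fun {α} hα h => by simpa using k.inv_mem (hα h) }
  have hHomfin : Finite (H →* ℂˣ) := (card_hom_le H).1
  let r : A →* (T →* ℂˣ) := (MonoidHom.compHom' T.subtype).comp A.subtype
  have hrT : ∀ α β : A, r α = r β ↔ ∀ t ∈ T, (α : H →* ℂˣ) t = (β : H →* ℂˣ) t := fun α β =>
    ⟨fun h t ht => DFunLike.congr_fun h ⟨t, ht⟩, fun h => MonoidHom.ext fun t => h t t.2⟩
  have hcardA : Nat.card A = Nat.card r.ker * Nat.card r.range := by
    rw [← r.ker.card_mul_index, Subgroup.index_ker]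
  have hm : Nat.card r.ker + 3 ≤ T.index := by
    have := card_add_three_le_index hHodd hna T (stabilizer_eq_bot_of_normal hfaith hirr hl)
      (r.ker.map A.subtype) (by
        rintro _ ⟨α, hα, rfl⟩ t ht
        exact (hrT α 1).1 (by rw [map_one]; exact hα) t ht)
    rwa [Subgroup.card_map_of_injective A.subtype_injective] at this
  have hSfin : (IrrKP (V ⋊[φ] H) k p).Finite :=
    (Irr_finite (V ⋊[φ] H)).subset fun χ ⟨W, hW, h, _⟩ => ⟨W, hW, h⟩
  let S := hSfin.toFinset
  have hdeg : ∀ χ ∈ S, ∃ n : ℕ, Odd n ∧ χ 1 = n := by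
    intro χ hχ
    obtain ⟨W, hW, rfl, -⟩ := hSfin.mem_toFinset.1 hχ
    exact ⟨_, odd_finrank hG W hW, FDRep.char_one W⟩
  let S₁ := S.filter fun χ => χ 1 = 1
  have hS₁ : S₁.card ≤ Nat.card A := by
    have hex : ∀ χ : S₁, ∃ α : A, ∀ g : V ⋊[φ] H, χ.1 g = ((α : H →* ℂˣ) g.right : ℂ) := by
      rintro ⟨χ, hχ⟩
      obtain ⟨hχS, hχ1⟩ := Finset.mem_filter.1 hχ
      obtain ⟨W, hW, rfl, hk, -⟩ := hSfin.mem_toFinset.1 hχS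
      obtain ⟨ψ, hψ⟩ := exists_hom_of_finrank_one W (by
        rw [FDRep.char_one] at hχ1; exact_mod_cast hχ1)
      refine ⟨⟨ψ.comp SemidirectProduct.inr, fun h => ?_⟩, fun g => ?_⟩
      · have := hk (SemidirectProduct.inr h)
        rw [hψ] at this
        exact this
      · change W.character g = (ψ (SemidirectProduct.inr g.right) : ℂ)
        rw [hψ]
        conv_lhs => rw [← SemidirectProduct.inl_left_mul_inr_right g, map_mul,
          linear_character_inl hfaith hirr, one_mul]
    choose F hF using hex
    have hFinj : Function.Injective F := fun χ χ' h =>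
      Subtype.ext (funext fun g => by rw [hF, hF, h])
    simpa using Nat.card_le_card_of_injective F hFinj
  let l' : Bool → LinChar φ := fun b => if b then l else l⁻¹
  have hstab : ∀ b, MulAction.stabilizer H (l' b) = T := by
    intro b; cases b
    · exact hstab_inv
    · rfl
  choose s hs using fun y : r.range => y.2
  -- twists of the induced characters lying over `l` and over `l⁻¹`
  let θ : Bool × r.range → (V ⋊[φ] H → ℂ) := fun x =>
    (FDRep.of (orbitRep (l' x.1) (s x.2 : H →* ℂˣ))).character
  have hθinj : Function.Injective θ := by
    rintro ⟨b, y⟩ ⟨c, z⟩ h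
    obtain ⟨h1, h2⟩ := orbitRep_character_inj h
    rw [hstab] at h2
    have hyz : y = z := Subtype.ext (by rw [← hs y, ← hs z]; exact (hrT _ _).2 h2)
    have hbc : b = c := by
      cases b <;> cases c
      · rfl
      · exact absurd ((MulAction.mem_orbit_symm).1 h1) hinv
      · exact absurd h1 hinv
      · rfl
    rw [hyz, hbc]
  have := Fintype.ofFinite r.range
  let B : Finset (V ⋊[φ] H → ℂ) := Finset.univ.image θ
  have hBcard : B.card = 2 * Nat.card r.range := by
    rw [Finset.card_image_of_injective _ hθinj, Finset.card_univ, Fintype.card_prod,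
      Fintype.card_bool, Nat.card_eq_fintype_card]
  have hBdeg : ∀ χ ∈ B, χ 1 = (T.index : ℂ) := by
    intro χ hχ
    obtain ⟨x, -, rfl⟩ := Finset.mem_image.1 hχ
    change (FDRep.of _).character 1 = _
    rw [FDRep.char_one, orbitRep_finrank, hstab]
  have hBS : B ⊆ S := by
    intro χ hχ
    obtain ⟨x, -, rfl⟩ := Finset.mem_image.1 hχ
    refine hSfin.mem_toFinset.2 ⟨FDRep.of (orbitRep (l' x.1) (s x.2 : H →* ℂˣ)),
      orbitRep_simple _ _, rfl, fun g => ?_, ?_⟩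
    · exact orbitRep_character_mem hp hV hkp _ _ (s x.2).2 g
    · rw [orbitRep_finrank, hstab]
      exact hpl
  have hdisj : Disjoint S₁ B := by
    rw [Finset.disjoint_left]
    intro χ h1 h2
    have h3 := (Finset.mem_filter.1 h1).2
    rw [hBdeg χ h2] at h3
    have : T.index = 1 := by exact_mod_cast h3
    omega
  have hsum1 : ∑ χ ∈ S₁, ((χ 1).re - 3) = S₁.card * (-2 : ℝ) := by
    rw [Finset.sum_congr rfl fun χ hχ => by rw [(Finset.mem_filter.1 hχ).2], Finset.sum_const]
    norm_num
  have hsumB : ∑ χ ∈ B, ((χ 1).re - 3) = B.card * ((T.index : ℝ) - 3) := by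
    rw [Finset.sum_congr rfl fun χ hχ => by rw [hBdeg χ hχ], Finset.sum_const]
    simp
  have hsub : S₁ ∪ B ⊆ S := Finset.union_subset (Finset.filter_subset _ _) hBS
  have hsum : 0 ≤ ∑ χ ∈ S, ((χ 1).re - 3) := by
    rw [← Finset.sum_sdiff hsub, Finset.sum_union hdisj, hsum1, hsumB]
    have hrest : 0 ≤ ∑ χ ∈ S \ (S₁ ∪ B), ((χ 1).re - 3) := by
      refine Finset.sum_nonneg fun χ hχ => ?_
      obtain ⟨hχS, hχn⟩ := Finset.mem_sdiff.1 hχ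
      obtain ⟨n, ⟨c, hc⟩, hn⟩ := hdeg χ hχS
      have hn1 : n ≠ 1 := fun h => hχn (Finset.mem_union_left _
        (Finset.mem_filter.2 ⟨hχS, by rw [hn, h, Nat.cast_one]⟩))
      have : (3 : ℝ) ≤ n := by exact_mod_cast (by omega : 3 ≤ n)
      rw [hn, Complex.natCast_re]
      linarith
    have h1 : (S₁.card : ℝ) ≤ Nat.card r.ker * Nat.card r.range := by
      exact_mod_cast hcardA ▸ hS₁
    have h2 : (B.card : ℝ) = 2 * Nat.card r.range := by exact_mod_cast hBcard
    have h3 : (Nat.card r.ker : ℝ) + 3 ≤ T.index := by exact_mod_cast hm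
    have h4 : (0 : ℝ) ≤ Nat.card r.range := Nat.cast_nonneg _
    rw [h2]
    nlinarith [mul_le_mul_of_nonneg_left h3 h4]
  have hSpos : (0 : ℝ) < S.card := by
    have h1 : 0 < B.card := by
      rw [hBcard]; exact Nat.mul_pos two_pos Nat.card_pos
    exact_mod_cast h1.trans_le (Finset.card_le_card hBS)
  have hcardS : Nat.card (IrrKP (V ⋊[φ] H) k p) = S.card :=
    Nat.card_eq_card_finite_toFinset hSfin
  rw [acdKP, hcardS, finsum_mem_eq_finite_toFinset_sum _ hSfin, le_div_iff₀ hSpos]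
  rw [Finset.sum_sub_distrib, Finset.sum_const, nsmul_eq_mul] at hsum
  linarith
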